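/- There is a constant C > 0 such that for every Schwartz function g : ℝ³ → ℂ, | ∫_{ℝ³} |g(y)|² ( ∫_{ℝ³} Im( conj(g(x)) ∇g(x) ) · (x−y)/|x−y| dx ) dy | ≤ C ‖g‖²_{L²(ℝ³)} ‖g‖²_{Ḣ^{1/2}(ℝ³)}. -/

import Mathlib

open MeasureTheory Real Complex Filter
open scoped FourierTransform ContDiff ENNReal

noncomputable section

abbrev E3 := EuclideanSpace ℝ (Fin 3)

/-- the `i`-th standard basis vector of `ℝ³`. -/
def e3 (i : Fin 3) : E3 := EuclideanSpace.single i (1 : ℝ)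

/-- the `i`-th spatial partial derivative. -/
def pd (g : E3 → ℂ) (i : Fin 3) (x : E3) : ℂ := fderiv ℝ g x (e3 i)

/-- the (spatial) Laplacian. -/
def lap (g : E3 → ℂ) (x : E3) : ℂ := ∑ i : Fin 3, fderiv ℝ (fun y => pd g i y) x (e3 i)

/-- the antiderivative `F(z) = ∫₀^z f(s) ds` of `f`. -/
def Fa (f : ℝ → ℝ) (z : ℝ) : ℝ := ∫ s in (0:ℝ)..z, f s

/-- `u` is a smooth decaying solution of the gNLS `i ∂ₜ u + α Δ u = μ f(|u|²) u`
on `[0,T] × ℝ³`: it is jointly smooth, every time derivative slice is a Schwartz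
function of `x`, and the equation holds pointwise on `[0,T] × ℝ³`. -/
structure IsSolution (α μ : ℝ) (f : ℝ → ℝ) (T : ℝ) (u : ℝ → E3 → ℂ) : Prop where
  smooth : ContDiff ℝ ∞ (fun p : ℝ × E3 => u p.1 p.2)
  schwartz : ∀ (k : ℕ) (t : ℝ), ∃ g : SchwartzMap E3 ℂ,
      ∀ x, iteratedDeriv k (fun s => u s x) t = g x
  eqn : ∀ t ∈ Set.Icc (0:ℝ) T, ∀ x : E3,
      Complex.I * deriv (fun s => u s x) t + (α : ℂ) * lap (u t) x
        = ((μ * f (Complex.normSq (u t x)) : ℝ) : ℂ) * u t x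

/-- the `i`-th component of the mass current `Im (conj u ∇u)`. -/
def massCur (g : E3 → ℂ) (i : Fin 3) (x : E3) : ℝ := ((starRingEnd ℂ) (g x) * pd g i x).im

/-- the Morawetz action centered at `y`. -/
def morAction (g : E3 → ℂ) (y : E3) : ℝ :=
  ∫ x : E3, ∑ i : Fin 3, massCur g i x * ((x i - y i) / ‖x - y‖)

/-- `|∇̸_y g(x)|²`, the squared norm of the angular part of the gradient. -/
def angGradSq (g : E3 → ℂ) (y x : E3) : ℝ :=
  ∑ i : Fin 3, Complex.normSq (pd g i x -
    (((x i - y i) / ‖x - y‖ : ℝ) : ℂ) *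
      ∑ j : Fin 3, (((x j - y j) / ‖x - y‖ : ℝ) : ℂ) * pd g j x)

/-- squared homogeneous Sobolev norm `‖g‖²_{Ḣ^σ}`. -/
def sobSq (σ : ℝ) (g : E3 → ℂ) : ℝ := ∫ ξ : E3, ‖ξ‖ ^ (2 * σ) * ‖𝓕 g ξ‖ ^ 2



open scoped SchwartzMap LineDeriv

def LL (f : SchwartzMap E3 ℂ) : ℝ := ∫ x, ‖f x‖ ^ 2
def DD (f : SchwartzMap E3 ℂ) : ℝ := ∑ i : Fin 3, ∫ x, ‖pd f i x‖ ^ 2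

lemma pd_eq (f : SchwartzMap E3 ℂ) (i : Fin 3) (x : E3) : pd f i x = (∂_{e3 i} f) x := by
  rw [SchwartzMap.lineDerivOp_apply_eq_fderiv]; rfl

lemma integ_pow_sq (f : SchwartzMap E3 ℂ) (k : ℕ) : Integrable (fun x => ‖x‖ ^ k * ‖f x‖ ^ 2) := by
  obtain ⟨C, hC⟩ := f.decay 0 0
  have h := (f.integrable_pow_mul volume k).bdd_mul (c := C) (f := fun x => ‖f x‖)
    (f.continuous.norm.aestronglyMeasurable) (ae_of_all _ fun x => by simpa using hC.2 x)
  refine h.congr (ae_of_all _ fun x => ?_)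
  simp only; ring

lemma LL_fourier (f : SchwartzMap E3 ℂ) : LL f = ∫ ξ, ‖(𝓕 f) ξ‖ ^ 2 :=
  (SchwartzMap.integral_norm_sq_fourier f).symm

lemma DD_fourier (f : SchwartzMap E3 ℂ) :
    DD f = ∫ ξ, (2 * π) ^ 2 * (‖ξ‖ ^ 2 * ‖(𝓕 f) ξ‖ ^ 2) := by
  unfold DD
  have h1 : ∀ i : Fin 3, ∫ x, ‖pd f i x‖ ^ 2 = ∫ ξ, (2 * π) ^ 2 * ((ξ i) ^ 2 * ‖(𝓕 f) ξ‖ ^ 2) := by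
    intro i
    simp only [pd_eq]
    rw [← SchwartzMap.integral_norm_sq_fourier]
    congr 1; ext ξ
    rw [SchwartzMap.fourier_lineDerivOp_eq]
    have : (fun x : E3 => inner ℝ x (e3 i)).HasTemperateGrowth := by fun_prop
    rw [smul_apply, SchwartzMap.smulLeftCLM_apply_apply this]
    simp [e3, EuclideanSpace.inner_single_right, mul_pow, abs_of_pos Real.pi_pos]
    try ring
  simp only [h1]
  rw [← integral_finsetSum]
  · congr 1; ext ξ
    rw [EuclideanSpace.norm_sq_eq]
    simp [Fin.sum_univ_three]; ring
  · intro i _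
    refine ((integ_pow_sq (𝓕 f) 2).const_mul ((2*π)^2)).mono' ?_ ?_
    · apply Continuous.aestronglyMeasurable
      have := (𝓕 f).continuous
      fun_prop
    · refine ae_of_all _ fun ξ => ?_
      rw [Real.norm_of_nonneg (by positivity)]
      refine mul_le_mul_of_nonneg_left (mul_le_mul_of_nonneg_right ?_ (by positivity)) (by positivity)
      have := EuclideanSpace.norm_sq_eq ξ
      rw [this]
      have := Finset.single_le_sum (f := fun i => ‖ξ i‖^2) (fun _ _ => by positivity) (Finset.mem_univ i)
      simpa using this

def mult (δ : ℝ) (ξ : E3) : ℝ := (1 + ‖δ • ξ‖ ^ 2) ^ (-1 : ℝ)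

lemma mult_eq (δ : ℝ) (ξ : E3) : mult δ ξ = (1 + (δ * ‖ξ‖) ^ 2)⁻¹ := by
  unfold mult
  rw [Real.rpow_neg_one, norm_smul, mul_pow, mul_pow]; simp

lemma mult_temp (δ : ℝ) : (mult δ).HasTemperateGrowth := by
  have h := Function.hasTemperateGrowth_one_add_norm_sq_rpow E3 (-1)
  have h2 : (fun ξ : E3 => δ • ξ).HasTemperateGrowth := by fun_prop
  exact h.comp h2

def reg (δ : ℝ) (g : SchwartzMap E3 ℂ) : SchwartzMap E3 ℂ :=
  SchwartzMap.fourierMultiplierCLM ℂ (mult δ) g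

lemma reg_fourier (δ : ℝ) (g : SchwartzMap E3 ℂ) (ξ : E3) :
    (𝓕 (reg δ g)) ξ = ((mult δ ξ : ℝ) : ℂ) * (𝓕 g) ξ := by
  unfold reg
  rw [SchwartzMap.fourierMultiplierCLM_apply, FourierTransform.fourier_fourierInv_eq,
    SchwartzMap.smulLeftCLM_apply_apply (mult_temp δ)]
  simp

lemma fourier_sub' (f h : SchwartzMap E3 ℂ) (ξ : E3) : (𝓕 (f - h)) ξ = (𝓕 f) ξ - (𝓕 h) ξ := by
  have : 𝓕 (f - h) = 𝓕 f - 𝓕 h := by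
    exact map_sub (FourierTransform.fourierCLM ℂ (SchwartzMap E3 ℂ)) f h
  rw [this]; rfl

def FF (a : ℝ) : ℝ := a / (1 + a)

lemma scal (A a : ℝ) (hA : 0 ≤ A) (ha : 0 ≤ a) :
    2 * ((1 + a ^ 2)⁻¹ - (1 + (2 * a) ^ 2)⁻¹) ^ 2 + A * (a ^ 2 * ((1 + a ^ 2)⁻¹) ^ 2)
      + 7 * A * (a ^ 2 * ((1 + (2 * a) ^ 2)⁻¹) ^ 2) ≤ 4 * (18 + 8 * A) * (a * (FF (2 * a) - FF a)) := by
  have e1 : a * (FF (2 * a) - FF a) = a ^ 2 * ((1 + a) * (1 + 2 * a))⁻¹ := by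
    unfold FF; field_simp; ring
  have h2 : (1 + (2 * a) ^ 2)⁻¹ ≤ (1 + a ^ 2)⁻¹ := by
    gcongr; linarith
  have h3 : ((1 + a ^ 2)⁻¹) ^ 2 ≤ 4 * ((1 + a) * (1 + 2 * a))⁻¹ := by
    rw [inv_pow, ← one_div, ← div_eq_mul_inv, div_le_div_iff₀ (by positivity) (by positivity)]
    nlinarith [sq_nonneg (a - 1), sq_nonneg (a^2), sq_nonneg a]
  have h4 : ((1 + a ^ 2)⁻¹ - (1 + (2 * a) ^ 2)⁻¹) ≤ 3 * a * (1 + a ^ 2)⁻¹ := by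
    have : ((1 + a ^ 2)⁻¹ - (1 + (2 * a) ^ 2)⁻¹) = (3 * a ^ 2 / (1 + (2 * a) ^ 2)) * (1 + a ^ 2)⁻¹ := by
      field_simp; ring
    rw [this]
    gcongr
    rw [div_le_iff₀ (by positivity)]
    nlinarith [mul_nonneg ha (sq_nonneg (2*a-1)), mul_nonneg ha (sq_nonneg a)]
  have h5 : ((1 + a ^ 2)⁻¹ - (1 + (2 * a) ^ 2)⁻¹) ^ 2 ≤ 9 * (a ^ 2 * ((1 + a ^ 2)⁻¹) ^ 2) := by
    calc _ ≤ (3 * a * (1 + a ^ 2)⁻¹) ^ 2 := by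
          apply pow_le_pow_left₀ (by linarith) h4
      _ = _ := by ring
  have h6 : ((1 + (2 * a) ^ 2)⁻¹) ^ 2 ≤ ((1 + a ^ 2)⁻¹) ^ 2 := by
    gcongr
  rw [e1]
  have h7 : 7 * A * (a ^ 2 * ((1 + (2 * a) ^ 2)⁻¹) ^ 2) ≤ 7 * A * (a ^ 2 * ((1 + a ^ 2)⁻¹) ^ 2) := by
    gcongr
  have h8 : (18 + 8 * A) * (a ^ 2 * ((1 + a ^ 2)⁻¹) ^ 2) ≤ (18 + 8 * A) * (a ^ 2 * (4 * ((1 + a) * (1 + 2 * a))⁻¹)) := by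
    gcongr
  linarith

lemma integ_w (g : SchwartzMap E3 ℂ) (k : ℕ) (w : E3 → ℝ) (C : ℝ) (hw : Continuous w) (hb : ∀ x, |w x| ≤ C) :
    Integrable (fun ξ => w ξ * (‖ξ‖ ^ k * ‖(𝓕 g) ξ‖ ^ 2)) :=
  (integ_pow_sq (𝓕 g) k).bdd_mul (c := C) hw.aestronglyMeasurable (ae_of_all _ hb)

lemma FF_bd (a : ℝ) (ha : 0 ≤ a) : 0 ≤ FF a ∧ FF a ≤ 1 := by
  unfold FF
  exact ⟨by positivity, by rw [div_le_one (by positivity)]; linarith⟩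

def JJ (g : SchwartzMap E3 ℂ) (δ : ℝ) : ℝ := ∫ ξ, FF (δ * ‖ξ‖) * (‖ξ‖ ^ 1 * ‖(𝓕 g) ξ‖ ^ 2)

lemma integ_J (g : SchwartzMap E3 ℂ) (δ : ℝ) (hδ : 0 ≤ δ) :
    Integrable (fun ξ => FF (δ * ‖ξ‖) * (‖ξ‖ ^ 1 * ‖(𝓕 g) ξ‖ ^ 2)) := by
  apply integ_w g 1 (fun ξ => FF (δ * ‖ξ‖)) 1
  · unfold FF
    refine Continuous.div (by fun_prop) (by fun_prop) fun x => by positivity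
  · intro x
    have := FF_bd (δ * ‖x‖) (by positivity)
    rw [abs_of_nonneg this.1]; exact this.2

lemma mult_cont (δ : ℝ) : Continuous (mult δ) := (mult_temp δ).1.continuous

lemma mult_bd (δ : ℝ) (ξ : E3) : 0 ≤ mult δ ξ ∧ mult δ ξ ≤ 1 := by
  rw [mult_eq]
  exact ⟨by positivity, inv_le_one_of_one_le₀ (by nlinarith [sq_nonneg (δ * ‖ξ‖)])⟩

lemma LL_diff (g : SchwartzMap E3 ℂ) (δ δ' : ℝ) :
    LL (reg δ g - reg δ' g) = ∫ ξ, (mult δ ξ - mult δ' ξ) ^ 2 * (‖ξ‖ ^ 0 * ‖(𝓕 g) ξ‖ ^ 2) := by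
  rw [LL_fourier]
  congr 1; ext ξ
  rw [fourier_sub', reg_fourier, reg_fourier, ← sub_mul, ← Complex.ofReal_sub, norm_mul, mul_pow, Complex.norm_real, Real.norm_eq_abs, sq_abs]
  simp

lemma LL_diff' (g : SchwartzMap E3 ℂ) (δ : ℝ) :
    LL (g - reg δ g) = ∫ ξ, (1 - mult δ ξ) ^ 2 * (‖ξ‖ ^ 0 * ‖(𝓕 g) ξ‖ ^ 2) := by
  rw [LL_fourier]
  congr 1; ext ξ
  rw [fourier_sub', reg_fourier, ← one_sub_mul, ← Complex.ofReal_one, ← Complex.ofReal_sub, norm_mul, mul_pow, Complex.norm_real, Real.norm_eq_abs, sq_abs]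
  simp

lemma DD_reg (g : SchwartzMap E3 ℂ) (δ : ℝ) :
    DD (reg δ g) = ∫ ξ, ((2 * π) ^ 2 * mult δ ξ ^ 2) * (‖ξ‖ ^ 2 * ‖(𝓕 g) ξ‖ ^ 2) := by
  rw [DD_fourier]
  congr 1; ext ξ
  rw [reg_fourier, norm_mul, mul_pow ‖((mult δ ξ : ℝ) : ℂ)‖, Complex.norm_real, Real.norm_eq_abs, sq_abs]
  ring

lemma LL_reg (g : SchwartzMap E3 ℂ) (δ : ℝ) :
    LL (reg δ g) = ∫ ξ, (mult δ ξ ^ 2) * (‖ξ‖ ^ 0 * ‖(𝓕 g) ξ‖ ^ 2) := by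
  rw [LL_fourier]
  congr 1; ext ξ
  rw [reg_fourier, norm_mul, mul_pow, Complex.norm_real, Real.norm_eq_abs, sq_abs]
  simp

def CC : ℝ := 4 * (18 + 8 * (2 * π) ^ 2)

lemma int_diff (g : SchwartzMap E3 ℂ) (δ δ' : ℝ) :
    Integrable (fun ξ => (mult δ ξ - mult δ' ξ) ^ 2 * (‖ξ‖ ^ 0 * ‖(𝓕 g) ξ‖ ^ 2)) := by
  apply integ_w g 0 (fun ξ => (mult δ ξ - mult δ' ξ) ^ 2) 1
  · have := mult_cont δ; have := mult_cont δ'; fun_prop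
  · intro x
    have := mult_bd δ x; have := mult_bd δ' x
    rw [abs_of_nonneg (by positivity), sq_le_one_iff_abs_le_one, abs_le]; constructor <;> linarith

lemma int_D (g : SchwartzMap E3 ℂ) (δ : ℝ) :
    Integrable (fun ξ => ((2 * π) ^ 2 * mult δ ξ ^ 2) * (‖ξ‖ ^ 2 * ‖(𝓕 g) ξ‖ ^ 2)) := by
  apply integ_w g 2 (fun ξ => ((2 * π) ^ 2 * mult δ ξ ^ 2)) ((2 * π) ^ 2)
  · have := mult_cont δ; fun_prop
  · intro x
    have := mult_bd δ x
    rw [abs_of_nonneg (by positivity)]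
    have : mult δ x ^ 2 ≤ 1 := by rw [sq_le_one_iff_abs_le_one, abs_le]; constructor <;> linarith
    nlinarith [sq_nonneg (2 * π)]

lemma step_bound (g : SchwartzMap E3 ℂ) (δ : ℝ) (hδ : 0 < δ) :
    2 * δ⁻¹ * LL (reg δ g - reg (2 * δ) g) + δ * DD (reg δ g) + 7 * δ * DD (reg (2 * δ) g)
      ≤ CC * (JJ g (2 * δ) - JJ g δ) := by
  rw [LL_diff, DD_reg, DD_reg, JJ, JJ, ← integral_sub (integ_J g _ (by positivity)) (integ_J g _ (by positivity))]
  have hi : Integrable (fun ξ => 2 * δ⁻¹ * ((mult δ ξ - mult (2 * δ) ξ) ^ 2 * (‖ξ‖ ^ 0 * ‖(𝓕 g) ξ‖ ^ 2))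
      + δ * (((2 * π) ^ 2 * mult δ ξ ^ 2) * (‖ξ‖ ^ 2 * ‖(𝓕 g) ξ‖ ^ 2))) :=
    ((int_diff g _ _).const_mul _).add ((int_D g _).const_mul _)
  rw [← integral_const_mul, ← integral_const_mul, ← integral_const_mul, ← integral_const_mul,
    ← integral_add ((int_diff g _ _).const_mul _) ((int_D g _).const_mul _),
    ← integral_add hi ((int_D g _).const_mul _)]
  refine integral_mono (hi.add ((int_D g _).const_mul _))
    (((integ_J g _ (by positivity)).sub (integ_J g _ (by positivity))).const_mul _) fun ξ => ?_
  simp only [mult_eq]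
  have h := scal ((2 * π) ^ 2) (δ * ‖ξ‖) (by positivity) (by positivity)
  have h' := mul_le_mul_of_nonneg_left h (show 0 ≤ δ⁻¹ * ‖(𝓕 g) ξ‖ ^ 2 by positivity)
  unfold CC
  have e : δ⁻¹ * δ = 1 := inv_mul_cancel₀ hδ.ne'
  have e2 : 2 * (δ * ‖ξ‖) = 2 * δ * ‖ξ‖ := by ring
  rw [e2] at h'
  convert h' using 1
  · generalize (1 + (2 * δ * ‖ξ‖) ^ 2)⁻¹ = p
    generalize (1 + (δ * ‖ξ‖) ^ 2)⁻¹ = q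
    field_simp
  · generalize FF _ = p
    field_simp

lemma JJ_le (g : SchwartzMap E3 ℂ) (δ : ℝ) (hδ : 0 ≤ δ) :
    0 ≤ JJ g δ ∧ JJ g δ ≤ sobSq (1/2) g := by
  constructor
  · refine integral_nonneg fun ξ => ?_
    have := (FF_bd (δ * ‖ξ‖) (by positivity)).1
    simp only [Pi.zero_apply]; positivity
  · have : sobSq (1/2) g = ∫ ξ, ‖ξ‖ ^ 1 * ‖(𝓕 g) ξ‖ ^ 2 := by
      unfold sobSq; simp [SchwartzMap.fourier_coe]
    rw [this]
    refine integral_mono (integ_J g _ hδ) (integ_pow_sq (𝓕 g) 1) fun ξ => ?_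
    have := (FF_bd (δ * ‖ξ‖) (by positivity)).2
    exact mul_le_of_le_one_left (by positivity) this

lemma DD_large (g : SchwartzMap E3 ℂ) (t : ℝ) (ht : 0 < t) :
    t * DD (reg t g) ≤ t⁻¹ * ((2 * π) ^ 2 * LL g) := by
  rw [DD_reg, LL_fourier, ← integral_const_mul, ← integral_const_mul, ← integral_const_mul]
  refine integral_mono ((int_D g _).const_mul _)
    (by simpa using (((integ_pow_sq (𝓕 g) 0).const_mul _).const_mul _)) fun ξ => ?_
  simp only [mult_eq]
  have h : (t * ‖ξ‖) ^ 2 * ((1 + (t * ‖ξ‖) ^ 2)⁻¹) ^ 2 ≤ 1 := by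
    rw [inv_pow, ← div_eq_mul_inv, div_le_one (by positivity)]
    nlinarith [sq_nonneg (t * ‖ξ‖), sq_nonneg ((t * ‖ξ‖) ^ 2)]
  have h' := mul_le_mul_of_nonneg_left h (show 0 ≤ t⁻¹ * (2 * π) ^ 2 * ‖(𝓕 g) ξ‖ ^ 2 by positivity)
  convert h' using 1
  · field_simp
  · ring

lemma LL_reg_le (g : SchwartzMap E3 ℂ) (t : ℝ) : LL (reg t g) ≤ LL g := by
  rw [LL_reg, LL_fourier]
  have h0 : Integrable fun ξ => ‖(𝓕 g) ξ‖ ^ 2 := by simpa using integ_pow_sq (𝓕 g) 0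
  refine integral_mono_of_nonneg (ae_of_all _ fun ξ => by simp only [Pi.zero_apply]; positivity) h0
    (ae_of_all _ fun ξ => ?_)
  have := mult_bd t ξ
  have : mult t ξ ^ 2 ≤ 1 := by rw [sq_le_one_iff_abs_le_one, abs_le]; constructor <;> linarith
  simp only [pow_zero, one_mul]
  exact mul_le_of_le_one_left (by positivity) this

lemma DD_reg_le (g : SchwartzMap E3 ℂ) (t : ℝ) : DD (reg t g) ≤ DD g := by
  rw [DD_reg, DD_fourier]
  refine integral_mono (int_D g t) ((integ_pow_sq (𝓕 g) 2).const_mul _) fun ξ => ?_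
  have := mult_bd t ξ
  have : mult t ξ ^ 2 ≤ 1 := by rw [sq_le_one_iff_abs_le_one, abs_le]; constructor <;> linarith
  simp only
  gcongr
  exact mul_le_of_le_one_right (by positivity) this

lemma LL_small (g : SchwartzMap E3 ℂ) (t : ℝ) (ht : 0 < t) :
    t⁻¹ * LL (g - reg t g) ≤ t * DD g := by
  rw [DD_fourier, LL_diff', ← integral_const_mul, ← integral_const_mul]
  refine integral_mono_of_nonneg (ae_of_all _ fun ξ => by simp only [Pi.zero_apply]; positivity)
    (((integ_pow_sq (𝓕 g) 2).const_mul _).const_mul _)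
    (ae_of_all _ fun ξ => ?_)
  simp only [mult_eq]
  have e : 1 - (1 + (t * ‖ξ‖) ^ 2)⁻¹ = (t * ‖ξ‖) ^ 2 / (1 + (t * ‖ξ‖) ^ 2) := by
    field_simp; ring
  have h : (1 - (1 + (t * ‖ξ‖) ^ 2)⁻¹) ^ 2 ≤ (t * ‖ξ‖) ^ 2 := by
    rw [e]
    apply pow_le_pow_left₀ (by positivity)
    have : 0 ≤ t * ‖ξ‖ := by positivity
    rw [div_le_iff₀ (by positivity)]
    nlinarith [mul_nonneg this (sq_nonneg (t * ‖ξ‖ - 1))]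
  have h2 : (1:ℝ) ≤ (2 * π) ^ 2 := by nlinarith [Real.pi_gt_three]
  calc t⁻¹ * ((1 - (1 + (t * ‖ξ‖) ^ 2)⁻¹) ^ 2 * (‖ξ‖ ^ 0 * ‖(𝓕 g) ξ‖ ^ 2))
      ≤ t⁻¹ * ((t * ‖ξ‖) ^ 2 * (‖ξ‖ ^ 0 * ‖(𝓕 g) ξ‖ ^ 2)) := by gcongr
    _ = 1 * (t * (‖ξ‖ ^ 2 * ‖(𝓕 g) ξ‖ ^ 2)) := by field_simp
    _ ≤ (2 * π) ^ 2 * (t * (‖ξ‖ ^ 2 * ‖(𝓕 g) ξ‖ ^ 2)) := by gcongr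
    _ = _ := by ring

/-- Abstract interpolation. -/
lemma interp (M : SchwartzMap E3 ℂ → ℂ) (hM0 : M 0 = 0)
    (hK : ∀ (f h : SchwartzMap E3 ℂ) (l : ℝ), 0 < l →
      ‖M f - M h‖ ≤ 2 * l⁻¹ * LL (f - h) + l * DD f + 7 * l * DD h) (g : SchwartzMap E3 ℂ) :
    ‖M g‖ ≤ CC * sobSq (1/2) g := by
  have hCC : 0 ≤ CC := by unfold CC; positivity
  have hD0 : 0 ≤ DD g := Finset.sum_nonneg fun i _ => integral_nonneg fun x => by simp only [Pi.zero_apply]; positivity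
  have hDr : DD (0 : SchwartzMap E3 ℂ) = 0 := by
    have : ((0 : SchwartzMap E3 ℂ) : E3 → ℂ) = 0 := rfl
    simp [DD, pd, this]
  -- telescoping
  have h1 : ∀ (δ : ℝ), 0 < δ → ∀ n : ℕ,
      ‖M (reg δ g) - M (reg (2 ^ n * δ) g)‖ ≤ CC * (JJ g (2 ^ n * δ) - JJ g δ) := by
    intro δ hδ n
    induction n with
    | zero => simp
    | succ n ih =>
      have hp : 0 < 2 ^ n * δ := by positivity
      have h2 := (hK (reg (2 ^ n * δ) g) (reg (2 * (2 ^ n * δ)) g) _ hp).trans (step_bound g _ hp)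
      have e : (2:ℝ) ^ (n + 1) * δ = 2 * (2 ^ n * δ) := by ring
      rw [e]
      have := norm_sub_le_norm_sub_add_norm_sub (M (reg δ g)) (M (reg (2 ^ n * δ) g)) (M (reg (2 * (2 ^ n * δ)) g))
      linarith
  have h2 : ∀ t : ℝ, 0 < t → ‖M (reg t g)‖ ≤ t⁻¹ * (2 * LL g + (2 * π) ^ 2 * LL g) := by
    intro t ht
    have := hK (reg t g) 0 t ht
    rw [hM0, sub_zero, sub_zero, hDr] at this
    have h3 := DD_large g t ht
    have h4 : t⁻¹ * LL (reg t g) ≤ t⁻¹ * LL g := by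
      have := LL_reg_le g t; gcongr
    linarith
  have h3 : ∀ δ : ℝ, 0 < δ → ‖M (reg δ g)‖ ≤ CC * sobSq (1/2) g := by
    intro δ hδ
    have hlim : Tendsto (fun n : ℕ => CC * sobSq (1/2) g + (2 ^ n * δ)⁻¹ * (2 * LL g + (2 * π) ^ 2 * LL g)) atTop
        (nhds (CC * sobSq (1/2) g + 0 * (2 * LL g + (2 * π) ^ 2 * LL g))) := by
      refine Tendsto.const_add _ (Tendsto.mul_const _ ?_)
      apply Tendsto.inv_tendsto_atTop
      exact (tendsto_pow_atTop_atTop_of_one_lt (by norm_num)).atTop_mul_const hδ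
    rw [zero_mul, add_zero] at hlim
    refine ge_of_tendsto' hlim fun n => ?_
    have hp : 0 < 2 ^ n * δ := by positivity
    have a1 := h1 δ hδ n
    have a2 := h2 _ hp
    have a3 := (JJ_le g _ hp.le).2
    have a4 := (JJ_le g _ hδ.le).1
    have a5 : CC * (JJ g (2 ^ n * δ) - JJ g δ) ≤ CC * sobSq (1/2) g := by
      gcongr; linarith
    have a6 := norm_le_norm_sub_add (M (reg δ g)) (M (reg (2 ^ n * δ) g))
    linarith
  have hlim : Tendsto (fun δ : ℝ => CC * sobSq (1/2) g + δ * (10 * DD g)) (nhdsWithin 0 (Set.Ioi 0))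
        (nhds (CC * sobSq (1/2) g + 0 * (10 * DD g))) := by
    refine Tendsto.const_add _ (Tendsto.mul_const _ ?_)
    exact tendsto_nhdsWithin_of_tendsto_nhds tendsto_id
  rw [zero_mul, add_zero] at hlim
  refine ge_of_tendsto hlim ?_
  filter_upwards [self_mem_nhdsWithin] with δ hδ
  have hδ : 0 < δ := hδ
  have a1 := h3 δ hδ
  have a2 := hK g (reg δ g) δ hδ
  have a3 := LL_small g δ hδ
  have a4 : δ * DD (reg δ g) ≤ δ * DD g := by
    have := DD_reg_le g δ; gcongr
  have a6 := norm_le_norm_sub_add (M g) (M (reg δ g))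
  linarith

lemma sch_bd (f : SchwartzMap E3 ℂ) : ∃ C, ∀ x, ‖f x‖ ≤ C := by
  obtain ⟨C, hC⟩ := f.decay 0 0
  exact ⟨C, fun x => by simpa using hC.2 x⟩

lemma integ_c (c : E3 → ℝ) (C : ℝ) (hc : Continuous c) (hb : ∀ x, |c x| ≤ C) (f h : SchwartzMap E3 ℂ) :
    Integrable (fun x => c x • ((starRingEnd ℂ) (f x) * h x)) := by
  obtain ⟨D, hD⟩ := sch_bd f
  have h1 : Integrable (fun x => (starRingEnd ℂ) (f x) * h x) :=
    h.integrable.bdd_mul (c := D)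
      (Complex.continuous_conj.comp f.continuous).aestronglyMeasurable
      (ae_of_all _ fun x => by simpa using hD x)
  exact h1.bdd_smul C hc.aestronglyMeasurable (ae_of_all _ hb)

lemma integ_sq (b : E3 → ℝ) (C : ℝ) (hc : Continuous b) (hb : ∀ x, |b x| ≤ C) (f : SchwartzMap E3 ℂ) :
    Integrable (fun x => b x * ‖f x‖ ^ 2) := by
  have := integ_pow_sq f 0
  simp only [pow_zero, one_mul] at this
  exact this.bdd_mul (c := C) hc.aestronglyMeasurable (ae_of_all _ hb)

lemma CS (b : E3 → ℝ) (C : ℝ) (hbc : Continuous b) (hb : ∀ x, 0 ≤ b x ∧ b x ≤ C) (f h : SchwartzMap E3 ℂ)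
    (c : E3 → ℝ) (hc : ∀ x, |c x| ≤ b x) (P : E3 → ℂ) (hP : ∀ x, ‖P x‖ = ‖f x‖ * ‖h x‖) (a : ℝ) (ha : 0 < a) :
    ‖∫ x, c x • P x‖ ≤ (a⁻¹ * (∫ x, b x ^ 2 * ‖f x‖ ^ 2) + a * LL h) / 2 := by
  have hi1 : Integrable (fun x => b x ^ 2 * ‖f x‖ ^ 2) :=
    integ_sq (fun x => b x ^ 2) (C ^ 2) (by fun_prop) (fun x => by
      rw [abs_of_nonneg (by positivity)]; exact pow_le_pow_left₀ (hb x).1 (hb x).2 2) f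
  have hi2 : Integrable (fun x => ‖h x‖ ^ 2) := by simpa using integ_pow_sq h 0
  have : (a⁻¹ * (∫ x, b x ^ 2 * ‖f x‖ ^ 2) + a * LL h) / 2
      = ∫ x, (a⁻¹ * (b x ^ 2 * ‖f x‖ ^ 2) + a * ‖h x‖ ^ 2) / 2 := by
    rw [integral_div, integral_add (hi1.const_mul _) (hi2.const_mul _), integral_const_mul, integral_const_mul]
    rfl
  rw [this]
  refine norm_integral_le_of_norm_le (((hi1.const_mul _).add (hi2.const_mul _)).div_const 2) (ae_of_all _ fun x => ?_)
  rw [norm_smul, hP, Real.norm_eq_abs]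
  have h1 : |c x| * (‖f x‖ * ‖h x‖) ≤ b x * (‖f x‖ * ‖h x‖) := by
    have := hc x; gcongr
  refine h1.trans ?_
  have : 0 ≤ a⁻¹ * (b x * ‖f x‖ - a * ‖h x‖) ^ 2 := by positivity
  have e : a⁻¹ * (b x * ‖f x‖ - a * ‖h x‖) ^ 2 = a⁻¹ * (b x ^ 2 * ‖f x‖ ^ 2) + a * ‖h x‖ ^ 2 - 2 * (b x * (‖f x‖ * ‖h x‖)) := by
    field_simp; ring
  rw [e] at this
  linarith

lemma ibp (i : Fin 3) (V V' : E3 → ℝ) (C C' : ℝ) (hV : Continuous V) (hV' : Continuous V')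
    (hb : ∀ x, |V x| ≤ C) (hb' : ∀ x, |V' x| ≤ C')
    (hd : ∀ x, HasLineDerivAt ℝ V (V' x) x (e3 i)) (f h : SchwartzMap E3 ℂ) :
    ∫ x, V x • ((starRingEnd ℂ) (f x) * (∂_{e3 i} h) x) =
      - (∫ x, V x • ((starRingEnd ℂ) ((∂_{e3 i} f) x) * h x))
      - ∫ x, V' x • ((starRingEnd ℂ) (f x) * h x) := by
  have i1 := integ_c V C hV hb f (∂_{e3 i} h)
  have i2 := integ_c V C hV hb (∂_{e3 i} f) h
  have i3 := integ_c V C hV hb f h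
  have i4 := integ_c V' C' hV' hb' f h
  have i5 : Integrable (fun x => V x • ((starRingEnd ℂ) ((∂_{e3 i} f) x) * h x) +
      V x • ((starRingEnd ℂ) (f x) * (∂_{e3 i} h) x)) := i2.add i1
  have key := integral_bilinear_hasLineDerivAt_right_eq_neg_left_of_integrable (μ := volume)
    (f := V) (f' := V') (g := fun x => (starRingEnd ℂ) (f x) * h x)
    (g' := fun x => (starRingEnd ℂ) ((∂_{e3 i} f) x) * h x + (starRingEnd ℂ) (f x) * (∂_{e3 i} h) x)
    (v := e3 i) (B := ContinuousLinearMap.lsmul ℝ ℝ)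
    (by simpa using i4) (by simpa [mul_add] using i5) (by simpa using i3)
    (fun x _ => hd x) (fun x _ => by
      have hf : ∀ f : SchwartzMap E3 ℂ, HasDerivAt (fun t : ℝ => f (x + t • e3 i)) ((∂_{e3 i} f) x) 0 := by
        intro f
        have := (f.differentiableAt (x := x)).hasFDerivAt.hasLineDerivAt (e3 i)
        rw [SchwartzMap.lineDerivOp_apply_eq_fderiv]
        exact this
      have := (hf f).star.mul (hf h)
      simp only [zero_smul, add_zero] at this
      exact this)
  simp only [ContinuousLinearMap.lsmul_apply, smul_add] at key
  rw [integral_add i2 i1] at key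
  linear_combination key

section weights
variable (e : ℝ) (y : E3)

def ww (x : E3) : ℝ := (√(e ^ 2 + ‖x - y‖ ^ 2))⁻¹
def zz (i : Fin 3) (x : E3) : ℝ := x i - y i

variable {e}

lemma ww_cont (he : 0 < e) : Continuous (ww e y) := by
  unfold ww
  refine Continuous.inv₀ (by fun_prop) fun x => by positivity

lemma zz_cont (i : Fin 3) : Continuous (zz y i) := by unfold zz; fun_prop

lemma ww_pos (he : 0 < e) (x : E3) : 0 < ww e y x := by unfold ww; positivity

lemma ww_le (he : 0 < e) (x : E3) : ww e y x ≤ e⁻¹ := by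
  unfold ww
  gcongr
  apply Real.le_sqrt_of_sq_le
  nlinarith [sq_nonneg ‖x - y‖]

lemma ww_sum (he : 0 < e) (x : E3) : (∑ i : Fin 3, zz y i x ^ 2) * ww e y x ^ 2 ≤ 1 := by
  have : ∑ i : Fin 3, zz y i x ^ 2 = ‖x - y‖ ^ 2 := by
    rw [EuclideanSpace.norm_sq_eq]; simp [zz]
  rw [this, ww, inv_pow, Real.sq_sqrt (by positivity), ← div_eq_mul_inv, div_le_one (by positivity)]
  nlinarith

lemma ww_i (he : 0 < e) (x : E3) (i : Fin 3) : zz y i x ^ 2 * ww e y x ^ 2 ≤ 1 := by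
  refine le_trans ?_ (ww_sum y he x)
  gcongr
  exact Finset.single_le_sum (f := fun i => zz y i x ^ 2) (fun _ _ => by positivity) (Finset.mem_univ i)

lemma zz_deriv (i : Fin 3) (x : E3) : HasDerivAt (fun t : ℝ => zz y i (x + t • e3 i)) 1 0 := by
  have : (fun t : ℝ => zz y i (x + t • e3 i)) = fun t => x i + t - y i := by
    ext t; simp [zz, e3]
  rw [this]
  exact ((hasDerivAt_id (0:ℝ)).const_add (x i)).sub_const (y i)

lemma ww_deriv (he : 0 < e) (i : Fin 3) (x : E3) :
    HasDerivAt (fun t : ℝ => ww e y (x + t • e3 i)) (-(zz y i x * ww e y x ^ 3)) 0 := by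
  have h1 : HasDerivAt (fun t : ℝ => x + t • e3 i - y) (e3 i) 0 := by
    have := (((hasDerivAt_id (0:ℝ)).smul_const (e3 i)).const_add x).sub_const y
    simpa using this
  have h2 := h1.norm_sq.const_add (e ^ 2)
  have hp : 0 < e ^ 2 + ‖x - y‖ ^ 2 := by positivity
  have hp' : e ^ 2 + ‖x + (0:ℝ) • e3 i - y‖ ^ 2 ≠ 0 := by positivity
  have h3 := (h2.sqrt hp').inv (by positivity)
  have h4 : HasDerivAt (fun t : ℝ => ww e y (x + t • e3 i)) _ 0 := h3
  refine h4.congr_deriv ?_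
  have : inner ℝ (x + (0:ℝ) • e3 i - y) (e3 i) = zz y i x := by
    simp [e3, EuclideanSpace.inner_single_right, zz]
  rw [this]
  simp only [zero_smul, add_zero, ww]
  have : √(e ^ 2 + ‖x - y‖ ^ 2) ≠ 0 := by positivity
  field_simp

def VV (e : ℝ) (i : Fin 3) (x : E3) : ℝ := zz y i x * ww e y x
def VV' (e : ℝ) (i : Fin 3) (x : E3) : ℝ := ww e y x - zz y i x ^ 2 * ww e y x ^ 3
def UU (e : ℝ) (i : Fin 3) (x : E3) : ℝ := zz y i x * ww e y x ^ 2
def UU' (e : ℝ) (i : Fin 3) (x : E3) : ℝ := ww e y x ^ 2 - 2 * zz y i x ^ 2 * ww e y x ^ 4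

lemma VV_bd (he : 0 < e) (i : Fin 3) (x : E3) : |VV y e i x| ≤ 1 := by
  rw [← sq_le_one_iff_abs_le_one, VV, mul_pow]; exact ww_i y he x i

lemma VV'_bd (he : 0 < e) (i : Fin 3) (x : E3) : |VV' y e i x| ≤ ww e y x := by
  have h := ww_i y he x i
  have h' := ww_pos y he x
  have : VV' y e i x = ww e y x * (1 - zz y i x ^ 2 * ww e y x ^ 2) := by unfold VV'; ring
  rw [this, abs_mul, abs_of_pos h']
  refine mul_le_of_le_one_right h'.le ?_
  have : 0 ≤ zz y i x ^ 2 * ww e y x ^ 2 := by positivity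
  rw [abs_le]; constructor <;> linarith

lemma UU_bd (he : 0 < e) (i : Fin 3) (x : E3) : |UU y e i x| ≤ ww e y x := by
  have h' := ww_pos y he x
  have h := VV_bd y he i x
  have : UU y e i x = VV y e i x * ww e y x := by unfold UU VV; ring
  rw [this, abs_mul, abs_of_pos h']
  exact mul_le_of_le_one_left h'.le h

lemma UU'_bd (he : 0 < e) (i : Fin 3) (x : E3) : |UU' y e i x| ≤ ww e y x ^ 2 := by
  have h := ww_i y he x i
  have h' := ww_pos y he x
  have : UU' y e i x = ww e y x ^ 2 * (1 - 2 * (zz y i x ^ 2 * ww e y x ^ 2)) := by unfold UU'; ring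
  rw [this, abs_mul, abs_of_pos (by positivity)]
  refine mul_le_of_le_one_right (by positivity) ?_
  have : 0 ≤ zz y i x ^ 2 * ww e y x ^ 2 := by positivity
  rw [abs_le]; constructor <;> linarith

lemma VV_deriv (he : 0 < e) (i : Fin 3) (x : E3) : HasLineDerivAt ℝ (VV y e i) (VV' y e i x) x (e3 i) := by
  have := (zz_deriv y i x).mul (ww_deriv y he i x)
  refine HasDerivAt.congr_deriv (f := fun t : ℝ => VV y e i (x + t • e3 i)) this ?_
  simp [VV']; ring

lemma UU_deriv (he : 0 < e) (i : Fin 3) (x : E3) : HasLineDerivAt ℝ (UU y e i) (UU' y e i x) x (e3 i) := by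
  have := (zz_deriv y i x).mul ((ww_deriv y he i x).pow 2)
  refine HasDerivAt.congr_deriv (f := fun t : ℝ => UU y e i (x + t • e3 i)) this ?_
  simp [UU']; ring

lemma VV_cont (he : 0 < e) (i : Fin 3) : Continuous (VV y e i) := by
  have := ww_cont y he; have := zz_cont y i; unfold VV; fun_prop
lemma VV'_cont (he : 0 < e) (i : Fin 3) : Continuous (VV' y e i) := by
  have := ww_cont y he; have := zz_cont y i; unfold VV'; fun_prop
lemma UU_cont (he : 0 < e) (i : Fin 3) : Continuous (UU y e i) := by
  have := ww_cont y he; have := zz_cont y i; unfold UU; fun_prop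
lemma UU'_cont (he : 0 < e) (i : Fin 3) : Continuous (UU' y e i) := by
  have := ww_cont y he; have := zz_cont y i; unfold UU'; fun_prop

lemma DD_eq (f : SchwartzMap E3 ℂ) : DD f = ∑ i : Fin 3, LL (∂_{e3 i} f) := by
  simp [DD, LL, pd_eq]

lemma LL_nonneg (f : SchwartzMap E3 ℂ) : 0 ≤ LL f := integral_nonneg fun x => by simp only [Pi.zero_apply]; positivity

lemma LL_le_DD (f : SchwartzMap E3 ℂ) (i : Fin 3) : LL (∂_{e3 i} f) ≤ DD f := by
  rw [DD_eq]
  exact Finset.single_le_sum (f := fun i => LL (∂_{e3 i} f)) (fun _ _ => LL_nonneg _) (Finset.mem_univ i)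

def HH (e : ℝ) (f : SchwartzMap E3 ℂ) : ℝ := ∫ x, ww e y x ^ 2 * ‖f x‖ ^ 2

lemma hardy (he : 0 < e) (f : SchwartzMap E3 ℂ) : HH y e f ≤ 12 * DD f := by
  have hwb : ∀ x, 0 ≤ ww e y x ∧ ww e y x ≤ e⁻¹ := fun x => ⟨(ww_pos y he x).le, ww_le y he x⟩
  have hw2 : ∀ x, ww e y x ^ 2 ≤ (e⁻¹) ^ 2 := fun x => pow_le_pow_left₀ (hwb x).1 (hwb x).2 2
  have h1 : ∀ i : Fin 3, ∫ x, UU' y e i x * ‖f x‖ ^ 2 ≤ HH y e f / 6 + 6 * LL (∂_{e3 i} f) := by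
    intro i
    have k := ibp i (UU y e i) (UU' y e i) (e⁻¹) ((e⁻¹) ^ 2) (UU_cont y he i) (UU'_cont y he i)
      (fun x => (UU_bd y he i x).trans (hwb x).2) (fun x => (UU'_bd y he i x).trans (hw2 x))
      (UU_deriv y he i) f f
    have c1 := CS (ww e y) (e⁻¹) (ww_cont y he) hwb f (∂_{e3 i} f) (UU y e i) (UU_bd y he i)
      (fun x => (starRingEnd ℂ) (f x) * (∂_{e3 i} f) x) (fun x => by simp) 6 (by norm_num)
    have c2 := CS (ww e y) (e⁻¹) (ww_cont y he) hwb f (∂_{e3 i} f) (UU y e i) (UU_bd y he i)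
      (fun x => (starRingEnd ℂ) ((∂_{e3 i} f) x) * f x) (fun x => by simp [mul_comm]) 6 (by norm_num)
    have e1 : ∫ x, UU' y e i x • ((starRingEnd ℂ) (f x) * f x) = ((∫ x, UU' y e i x * ‖f x‖ ^ 2 : ℝ) : ℂ) := by
      rw [← integral_complex_ofReal]
      congr 1; ext x
      rw [← Complex.normSq_eq_conj_mul_self, Complex.normSq_eq_norm_sq]
      simp
    rw [e1] at k
    have e2 : ((∫ x, UU' y e i x * ‖f x‖ ^ 2 : ℝ) : ℂ) =
       -((∫ x, UU y e i x • ((starRingEnd ℂ) (f x) * (∂_{e3 i} f) x))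
        + ∫ x, UU y e i x • ((starRingEnd ℂ) ((∂_{e3 i} f) x) * f x)) := by
      rw [k]; ring
    have e3' : |∫ x, UU' y e i x * ‖f x‖ ^ 2| ≤
        (6⁻¹ * HH y e f + 6 * LL (∂_{e3 i} f)) / 2 + (6⁻¹ * HH y e f + 6 * LL (∂_{e3 i} f)) / 2 := by
      rw [← Real.norm_eq_abs, ← Complex.norm_real, e2, norm_neg]
      exact (norm_add_le _ _).trans (add_le_add c1 c2)
    refine (le_abs_self _).trans (e3'.trans (le_of_eq ?_))
    ring
  have hint : ∀ i : Fin 3, Integrable (fun x => UU' y e i x * ‖f x‖ ^ 2) := fun i =>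
    integ_sq _ ((e⁻¹) ^ 2) (UU'_cont y he i) (fun x => (UU'_bd y he i x).trans (hw2 x)) f
  have hintw : Integrable (fun x => ww e y x ^ 2 * ‖f x‖ ^ 2) :=
    integ_sq (fun x => ww e y x ^ 2) ((e⁻¹) ^ 2) ((ww_cont y he).pow 2) (fun x => by rw [abs_of_nonneg (sq_nonneg _)]; exact hw2 x) f
  have h2 : HH y e f ≤ ∑ i : Fin 3, ∫ x, UU' y e i x * ‖f x‖ ^ 2 := by
    rw [← integral_finsetSum _ (fun i _ => hint i)]
    refine integral_mono hintw (integrable_finsetSum _ fun i _ => hint i) fun x => ?_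
    simp only
    rw [← Finset.sum_mul]
    gcongr
    have := ww_sum y he x
    have e1 : ∑ i : Fin 3, UU' y e i x = ww e y x ^ 2 * (3 - 2 * ((∑ i : Fin 3, zz y i x ^ 2) * ww e y x ^ 2)) := by
      simp only [UU', Fin.sum_univ_three]; ring
    rw [e1]
    exact le_mul_of_one_le_right (by positivity) (by linarith)
  have h3 : ∑ i : Fin 3, ∫ x, UU' y e i x * ‖f x‖ ^ 2 ≤ ∑ i : Fin 3, (HH y e f / 6 + 6 * LL (∂_{e3 i} f)) :=
    Finset.sum_le_sum fun i _ => h1 i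
  rw [Finset.sum_add_distrib, ← Finset.mul_sum, ← DD_eq] at h3
  simp at h3
  linarith

def BB (e : ℝ) (i : Fin 3) (f h : SchwartzMap E3 ℂ) : ℂ :=
  ∫ x, VV y e i x • ((starRingEnd ℂ) (f x) * (∂_{e3 i} h) x)

lemma BB1 (he : 0 < e) (i : Fin 3) (f h : SchwartzMap E3 ℂ) (l : ℝ) (hl : 0 < l) :
    ‖BB y e i f h‖ ≤ l⁻¹ * LL f + l * DD h := by
  have c := CS (fun _ => 1) 1 continuous_const (fun _ => by norm_num) f (∂_{e3 i} h) (VV y e i) (VV_bd y he i)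
      (fun x => (starRingEnd ℂ) (f x) * (∂_{e3 i} h) x) (fun x => by simp) l hl
  simp only [one_pow, one_mul] at c
  have h1 := mul_le_mul_of_nonneg_left (LL_le_DD h i) hl.le
  have h2 : 0 ≤ l⁻¹ * LL f := mul_nonneg (by positivity) (LL_nonneg f)
  have h3 : 0 ≤ l * LL (∂_{e3 i} h) := mul_nonneg (by positivity) (LL_nonneg _)
  unfold BB
  refine c.trans ?_
  change (l⁻¹ * LL f + _) / 2 ≤ _
  linarith

lemma BB2 (he : 0 < e) (i : Fin 3) (f h : SchwartzMap E3 ℂ) (l : ℝ) (hl : 0 < l) :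
    ‖BB y e i f h‖ ≤ l⁻¹ * LL h + 7 * l * DD f := by
  have hwb : ∀ x, 0 ≤ ww e y x ∧ ww e y x ≤ e⁻¹ := fun x => ⟨(ww_pos y he x).le, ww_le y he x⟩
  have hl' : 0 < l⁻¹ := by positivity
  have c1 := CS (fun _ => 1) 1 continuous_const (fun _ => by norm_num) (∂_{e3 i} f) h (VV y e i) (VV_bd y he i)
      (fun x => (starRingEnd ℂ) ((∂_{e3 i} f) x) * h x) (fun x => by simp) l⁻¹ hl'
  have c2 := CS (ww e y) (e⁻¹) (ww_cont y he) hwb f h (VV' y e i) (VV'_bd y he i)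
      (fun x => (starRingEnd ℂ) (f x) * h x) (fun x => by simp) l⁻¹ hl'
  simp only [one_pow, one_mul, inv_inv] at c1 c2
  change _ ≤ (l * LL (∂_{e3 i} f) + _) / 2 at c1
  change _ ≤ (l * HH y e f + _) / 2 at c2
  have k := ibp i (VV y e i) (VV' y e i) 1 (e⁻¹) (VV_cont y he i) (VV'_cont y he i)
      (VV_bd y he i) (fun x => (VV'_bd y he i x).trans (hwb x).2) (VV_deriv y he i) f h
  unfold BB
  rw [k]
  refine (norm_sub_le _ _).trans ?_
  rw [norm_neg]
  have h1 := mul_le_mul_of_nonneg_left (LL_le_DD f i) hl.le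
  have h2 := mul_le_mul_of_nonneg_left (hardy y he f) hl.le
  have h3 : 0 ≤ l * LL (∂_{e3 i} f) := mul_nonneg (by positivity) (LL_nonneg _)
  linarith

lemma BB_K (he : 0 < e) (i : Fin 3) (f h : SchwartzMap E3 ℂ) (l : ℝ) (hl : 0 < l) :
    ‖BB y e i f f - BB y e i h h‖ ≤ 2 * l⁻¹ * LL (f - h) + l * DD f + 7 * l * DD h := by
  have hI := fun f h : SchwartzMap E3 ℂ => integ_c (VV y e i) 1 (VV_cont y he i) (VV_bd y he i) f (∂_{e3 i} h)
  have : BB y e i f f - BB y e i h h = BB y e i (f - h) f + BB y e i h (f - h) := by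
    unfold BB
    rw [← integral_sub (hI _ _) (hI _ _), ← integral_add (hI _ _) (hI _ _)]
    congr 1; ext x
    have e1 : (∂_{e3 i} (f - h)) x = (∂_{e3 i} f) x - (∂_{e3 i} h) x := by
      have : ∂_{e3 i} (f - h) = ∂_{e3 i} f - ∂_{e3 i} h :=
        map_sub (LineDeriv.lineDerivOpCLM ℂ (SchwartzMap E3 ℂ) (e3 i)) f h
      rw [this]; rfl
    have e2 : (f - h) x = f x - h x := rfl
    rw [e1, e2, map_sub]
    simp only [Complex.real_smul]
    ring
  rw [this]
  have a1 := BB1 y he i (f - h) f l hl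
  have a2 := BB2 y he i h (f - h) l hl
  have := norm_add_le (BB y e i (f - h) f) (BB y e i h (f - h))
  linarith

lemma BB_final (he : 0 < e) (i : Fin 3) (g : SchwartzMap E3 ℂ) :
    ‖BB y e i g g‖ ≤ CC * sobSq (1/2) g := by
  refine interp (fun f => BB y e i f f) ?_ (fun f h l hl => BB_K y he i f h l hl) g
  simp [BB]

end weights

lemma massCur_eq (g : SchwartzMap E3 ℂ) (i : Fin 3) (x : E3) :
    massCur g i x = ((starRingEnd ℂ) (g x) * (∂_{e3 i} g) x).im := by
  rw [massCur, pd_eq]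

lemma mor_reg (e : ℝ) (he : 0 < e) (y : E3) (g : SchwartzMap E3 ℂ) :
    |∫ x, ∑ i : Fin 3, massCur g i x * VV y e i x| ≤ 3 * (CC * sobSq (1/2) g) := by
  have hI := fun i => integ_c (VV y e i) 1 (VV_cont y he i) (VV_bd y he i) g (∂_{e3 i} g)
  have h1 : ∀ i, (fun x => massCur g i x * VV y e i x) =
      fun x => Complex.imCLM (VV y e i x • ((starRingEnd ℂ) (g x) * (∂_{e3 i} g) x)) := by
    intro i; ext x
    rw [massCur_eq, Complex.imCLM_apply, Complex.smul_im, smul_eq_mul, mul_comm]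
  rw [integral_finsetSum]
  · refine (Finset.abs_sum_le_sum_abs _ _).trans ?_
    have : ∀ i ∈ (Finset.univ : Finset (Fin 3)), |∫ x, massCur g i x * VV y e i x| ≤ CC * sobSq (1/2) g := by
      intro i _
      rw [h1 i, ContinuousLinearMap.integral_comp_comm _ (hI i), Complex.imCLM_apply]
      exact (Complex.abs_im_le_norm _).trans (BB_final y he i g)
    refine (Finset.sum_le_sum this).trans ?_
    simp
  · intro i _
    rw [h1 i]
    exact Complex.imCLM.integrable_comp (hI i)

lemma mor_bound (y : E3) (g : SchwartzMap E3 ℂ) :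
    |morAction g y| ≤ 3 * (CC * sobSq (1/2) g) := by
  have hep : ∀ n : ℕ, 0 < (1 / ((n:ℝ) + 1)) := fun n => by positivity
  have hmc : ∀ i, Continuous (massCur g i) := by
    intro i
    have : massCur g i = fun x => ((starRingEnd ℂ) (g x) * (∂_{e3 i} g) x).im := by
      ext x; exact massCur_eq g i x
    rw [this]
    have := g.continuous
    have := (∂_{e3 i} g).continuous
    exact Complex.continuous_im.comp ((Complex.continuous_conj.comp g.continuous).mul this)
  have hlim : Tendsto (fun n : ℕ => ∫ x, ∑ i : Fin 3, massCur g i x * VV y (1 / ((n:ℝ) + 1)) i x) atTop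
      (nhds (morAction g y)) := by
    unfold morAction
    refine tendsto_integral_of_dominated_convergence (fun x => ∑ i : Fin 3, |massCur g i x|) ?_ ?_ ?_ ?_
    · intro n
      apply Continuous.aestronglyMeasurable
      refine continuous_finsetSum _ fun i _ => (hmc i).mul (VV_cont y (hep n) i)
    · refine integrable_finsetSum _ fun i _ => ?_
      have := integ_c (fun _ => 1) 1 continuous_const (fun _ => by norm_num) g (∂_{e3 i} g)
      simp only [one_smul] at this
      have := (Complex.imCLM.integrable_comp this).abs
      refine this.congr (ae_of_all _ fun x => ?_)
      simp only [Complex.imCLM_apply, massCur_eq]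
    · intro n
      refine ae_of_all _ fun x => ?_
      refine (norm_sum_le _ _).trans (Finset.sum_le_sum fun i _ => ?_)
      rw [Real.norm_eq_abs, abs_mul]
      exact mul_le_of_le_one_right (abs_nonneg _) (VV_bd y (hep n) i x)
    · refine ae_of_all _ fun x => ?_
      refine tendsto_finsetSum _ fun i _ => Tendsto.const_mul _ ?_
      by_cases hx : x = y
      · subst hx; simp [VV, zz]
      have hx' : 0 < ‖x - y‖ := norm_pos_iff.mpr (sub_ne_zero.mpr hx)
      unfold VV zz ww
      rw [div_eq_mul_inv]
      refine Tendsto.const_mul _ (Tendsto.inv₀ ?_ hx'.ne')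
      have h0 : Tendsto (fun n : ℕ => √((1 / ((n:ℝ) + 1)) ^ 2 + ‖x - y‖ ^ 2)) atTop (nhds (√(0 ^ 2 + ‖x - y‖ ^ 2))) :=
        (((tendsto_one_div_add_atTop_nhds_zero_nat (𝕜 := ℝ)).pow 2).add_const _).sqrt
      have e : √(0 ^ 2 + ‖x - y‖ ^ 2) = ‖x - y‖ := by
        rw [zero_pow two_ne_zero, zero_add, Real.sqrt_sq hx'.le]
      rwa [e] at h0
  exact le_of_tendsto' hlim.abs fun n => mor_reg _ (hep n) y g

/-- There is `C > 0` so that for every Schwartz `g : ℝ³ → ℂ`, the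
Morawetz interaction potential `∫ |g(y)|² M_y[g] dy` is bounded by
`C ‖g‖²_{L²} ‖g‖²_{Ḣ^{1/2}}`. -/
theorem interaction_potential_bound :
    ∃ C > (0:ℝ), ∀ g : SchwartzMap E3 ℂ,
      |∫ y : E3, Complex.normSq (g y) * morAction (fun x => g x) y|
        ≤ C * (∫ x : E3, Complex.normSq (g x)) * sobSq (1/2) (fun x => g x) := by
  refine ⟨3 * CC, by unfold CC; positivity, fun g => ?_⟩
  have hi : Integrable (fun y : E3 => Complex.normSq (g y)) := by
    simpa [Complex.normSq_eq_norm_sq] using integ_pow_sq g 0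
  have h := norm_integral_le_of_norm_le (f := fun y : E3 => Complex.normSq (g y) * morAction (fun x => g x) y)
    (hi.mul_const (3 * (CC * sobSq (1/2) (fun x => g x)))) (ae_of_all _ fun y => by
      rw [norm_mul, Real.norm_of_nonneg (Complex.normSq_nonneg _)]
      exact mul_le_mul_of_nonneg_left (mor_bound y g) (Complex.normSq_nonneg _))
  rw [integral_mul_const] at h
  rw [← Real.norm_eq_abs]
  refine h.trans (le_of_eq ?_)
  ring
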